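/- For a finite graph G with positive edge conductances c(e), the matrix-tree theorem: the number of spanning trees weighted by the product of their edge conductances equals any cofactor (principal minor obtained by deleting one row and the corresponding column) of the weighted Laplacian matrix Δ, where Δ_{u,v} = -c(uv) for u ≠ v adjacent, 0 for non-adjacent, and Δ_{v,v} = ∑_{u∼v} c(uv). -/

import Mathlib

open Finset
open scoped Classical

namespace WMTT

/-- The matrix with rows `e_i - e_{f i}` (with `e_{v0} = 0`). -/
noncomputable def fmat {V : Type*} [DecidableEq V] (v0 : V) (f : {u : V // u ≠ v0} → V) :
    Matrix {u : V // u ≠ v0} {u : V // u ≠ v0} ℝ :=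
  fun i j => (if (j : V) = i then 1 else 0) - (if (j : V) = f i then 1 else 0)

/-- `f` has a strictly decreasing rank function. -/
def Acyc {V : Type*} (v0 : V) (f : {u : V // u ≠ v0} → V) : Prop :=
  ∃ h : V → ℕ, ∀ i, h (f i) < h i

lemma det_acyc {V : Type*} [Fintype V] [DecidableEq V] (v0 : V) (f : {u : V // u ≠ v0} → V)
    (hf : Acyc v0 f) : (fmat v0 f).det = 1 := by
  obtain ⟨h, hh⟩ := hf
  have hM : (fmat v0 f).BlockTriangular (fun i => OrderDual.toDual (h i)) := by
    intro i j hij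
    have hij' : h i < h j := hij
    have h1 : (j : V) ≠ i := by rintro e; rw [e] at hij'; omega
    have h2 : (j : V) ≠ f i := by
      rintro e; have := hh i; rw [← e] at this; omega
    simp [fmat, h1, h2]
  rw [hM.det]
  apply Finset.prod_eq_one
  intro a _
  have : (fmat v0 f).toSquareBlock (fun i => OrderDual.toDual (h i)) a = 1 := by
    ext ⟨i, hi⟩ ⟨j, hj⟩
    have hij' : h i = h j := by
      have := hi.trans hj.symm
      exact this
    have h2 : (j : V) ≠ f i := by
      rintro e; have := hh i; rw [← e] at this; omega
    simp [fmat, Matrix.toSquareBlock_def, h2, Matrix.one_apply, Subtype.ext_iff, eq_comm]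
  rw [this, Matrix.det_one]

lemma det_not_acyc {V : Type*} [Fintype V] [DecidableEq V] (v0 : V) (f : {u : V // u ≠ v0} → V)
    (hf : ¬ Acyc v0 f) : (fmat v0 f).det = 0 := by
  set F : V → V := fun v => if hv : v ≠ v0 then f ⟨v, hv⟩ else v0 with hF
  have hFi : ∀ i : {u : V // u ≠ v0}, F i = f i := fun i => by simp [hF, i.2]
  have hF0 : F v0 = v0 := by simp [hF]
  have hex : ∃ v, ∀ n, F^[n] v ≠ v0 := by
    by_contra! hcon
    apply hf
    refine ⟨fun v => Nat.find (hcon v), fun i => ?_⟩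
    have hs := Nat.find_spec (hcon i)
    have hpos : Nat.find (hcon i) ≠ 0 := by
      intro h0
      rw [h0] at hs
      exact i.2 hs
    obtain ⟨m, hm⟩ := Nat.exists_eq_succ_of_ne_zero hpos
    rw [hm, Function.iterate_succ_apply, hFi] at hs
    have := Nat.find_min' (hcon (f i)) hs
    simp only
    omega
  obtain ⟨v, hv⟩ := hex
  let S : V → Prop := fun v => ∀ n, F^[n] v ≠ v0
  have hS0 : ¬ S v0 := fun h => h 0 rfl
  have hSF : ∀ i : {u : V // u ≠ v0}, S (f i) ↔ S i := by
    intro i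
    constructor
    · intro h n
      cases n with
      | zero => exact i.2
      | succ n => rw [Function.iterate_succ_apply, hFi]; exact h n
    · intro h n
      have := h (n+1)
      rwa [Function.iterate_succ_apply, hFi] at this
  apply Matrix.exists_mulVec_eq_zero_iff.mp
  refine ⟨fun i => if S i then 1 else 0, ?_, ?_⟩
  · intro h
    have := congrFun h ⟨v, hv 0⟩
    have hv' : S v := hv
    simp [hv'] at this
  · ext i
    have key : ∀ w : V, ∑ j : {u : V // u ≠ v0}, (if (j : V) = w then (1:ℝ) else 0) *
        (if S j then 1 else 0) = if S w then 1 else 0 := by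
      intro w
      by_cases hw : w = v0
      · subst hw
        rw [if_neg hS0]
        apply Finset.sum_eq_zero
        intro j _
        simp [j.2]
      · rw [Finset.sum_eq_single ⟨w, hw⟩]
        · simp
        · intro j _ hj
          have : (j : V) ≠ w := fun e => hj (Subtype.ext e)
          simp [this]
        · simp
    simp only [Matrix.mulVec, dotProduct, fmat, sub_mul, Finset.sum_sub_distrib, key, hSF]
    simp

/-- The edge set of a function. -/
noncomputable def edges {V : Type*} [Fintype V] [DecidableEq V] (v0 : V) (f : {u : V // u ≠ v0} → V) :
    Finset (Sym2 V) := univ.image fun i : {u : V // u ≠ v0} => s((i : V), f i)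

lemma card_edgeSet {V : Type*} [Fintype V] [DecidableEq V] (G : SimpleGraph V) (T : Finset (Sym2 V))
    (hT : ∀ e ∈ T, e ∈ G.edgeSet) :
    Nat.card (SimpleGraph.fromEdgeSet (T : Set (Sym2 V))).edgeSet = T.card := by
  have : (SimpleGraph.fromEdgeSet (T : Set (Sym2 V))).edgeSet = (T : Set (Sym2 V)) := by
    rw [SimpleGraph.edgeSet_fromEdgeSet]
    ext e
    simp only [Set.mem_sdiff]
    constructor
    · exact fun h => h.1
    · exact fun h => ⟨h, fun h' => G.not_isDiag_of_mem_edgeSet (hT e h) h'⟩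
  rw [this]
  simp

lemma card_sub {V : Type*} [Fintype V] [DecidableEq V] (v0 : V) :
    Fintype.card {u : V // u ≠ v0} + 1 = Fintype.card V := by
  have := Fintype.card_subtype_compl (fun u => u = v0)
  have h1 : 0 < Fintype.card V := Fintype.card_pos_iff.mpr ⟨v0⟩
  simp only [Fintype.card_subtype_eq] at this
  have h2 : Fintype.card {u : V // u ≠ v0} = Fintype.card {u : V // ¬ u = v0} := rfl
  omega

lemma edges_mem {V : Type*} [Fintype V] [DecidableEq V] (G : SimpleGraph V) (v0 : V)
    (f : {u : V // u ≠ v0} → V) (hG : ∀ i : {u : V // u ≠ v0}, G.Adj i (f i)) :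
    ∀ e ∈ edges v0 f, e ∈ G.edgeSet := by
  intro e he
  simp only [edges, mem_image, mem_univ, true_and] at he
  obtain ⟨i, rfl⟩ := he
  exact hG i

lemma conn {V : Type*} [Fintype V] [DecidableEq V] (G : SimpleGraph V) (v0 : V)
    (f : {u : V // u ≠ v0} → V) (hG : ∀ i : {u : V // u ≠ v0}, G.Adj i (f i)) (hf : Acyc v0 f) :
    (SimpleGraph.fromEdgeSet (edges v0 f : Set (Sym2 V))).Connected := by
  obtain ⟨h, hh⟩ := hf
  have hr : ∀ n, ∀ v, h v = n →
      (SimpleGraph.fromEdgeSet (edges v0 f : Set (Sym2 V))).Reachable v v0 := by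
    intro n
    induction n using Nat.strong_induction_on with
    | _ n ih =>
      intro v hv
      by_cases hv0 : v = v0
      · rw [hv0]
      · have h1 := ih _ (hv ▸ hh ⟨v, hv0⟩) _ rfl
        refine SimpleGraph.Reachable.trans (SimpleGraph.Adj.reachable ?_) h1
        rw [SimpleGraph.fromEdgeSet_adj]
        refine ⟨?_, (hG ⟨v, hv0⟩).ne⟩
        simp only [edges, coe_image, coe_univ, Set.image_univ, Set.mem_range]
        exact ⟨⟨v, hv0⟩, rfl⟩
  have : Nonempty V := ⟨v0⟩
  exact ⟨fun u v => (hr _ u rfl).trans (hr _ v rfl).symm⟩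

lemma edges_card {V : Type*} [Fintype V] [DecidableEq V] (G : SimpleGraph V) (v0 : V)
    (f : {u : V // u ≠ v0} → V) (hG : ∀ i : {u : V // u ≠ v0}, G.Adj i (f i)) (hf : Acyc v0 f) :
    (edges v0 f).card = Fintype.card {u : V // u ≠ v0} := by
  have h1 := (conn G v0 f hG hf).card_vert_le_card_edgeSet_add_one
  rw [card_edgeSet G _ (edges_mem G v0 f hG), Nat.card_eq_fintype_card] at h1
  have h2 : (edges v0 f).card ≤ _ := card_image_le
  rw [card_univ] at h2
  have := card_sub v0
  omega

lemma isTree {V : Type*} [Fintype V] [DecidableEq V] (G : SimpleGraph V) (v0 : V)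
    (f : {u : V // u ≠ v0} → V) (hG : ∀ i : {u : V // u ≠ v0}, G.Adj i (f i)) (hf : Acyc v0 f) :
    (SimpleGraph.fromEdgeSet (edges v0 f : Set (Sym2 V))).IsTree := by
  rw [SimpleGraph.isTree_iff_connected_and_card]
  refine ⟨conn G v0 f hG hf, ?_⟩
  rw [card_edgeSet G _ (edges_mem G v0 f hG), edges_card G v0 f hG hf, card_sub,
    Nat.card_eq_fintype_card]

lemma prod_edges {V : Type*} [Fintype V] [DecidableEq V] (G : SimpleGraph V) (v0 : V)
    (f : {u : V // u ≠ v0} → V) (hG : ∀ i : {u : V // u ≠ v0}, G.Adj i (f i)) (hf : Acyc v0 f)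
    (c : Sym2 V → ℝ) : ∏ e ∈ edges v0 f, c e = ∏ i : {u : V // u ≠ v0}, c s((i : V), f i) := by
  have h := edges_card G v0 f hG hf
  rw [← card_univ] at h
  have hinj := Finset.card_image_iff.mp h
  rw [edges, prod_image hinj]

lemma edges_inj {V : Type*} [Fintype V] [DecidableEq V] (v0 : V)
    (f g : {u : V // u ≠ v0} → V) (hf : Acyc v0 f) (he : edges v0 f = edges v0 g) :
    f = g := by
  obtain ⟨h, hh⟩ := hf
  have key : ∀ n, ∀ i : {u : V // u ≠ v0}, h i = n → f i = g i := by
    intro n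
    induction n using Nat.strong_induction_on with
    | _ n ih =>
      intro i hi
      have hm : s((i : V), f i) ∈ edges v0 g := by
        rw [← he]
        exact mem_image_of_mem _ (mem_univ i)
      simp only [edges, mem_image, mem_univ, true_and] at hm
      obtain ⟨j, hj⟩ := hm
      rw [Sym2.eq_iff] at hj
      rcases hj with ⟨h1, h2⟩ | ⟨h1, h2⟩
      · rw [← h2, Subtype.ext h1]
      · have h3 := hh i
        have h4 := ih (h j) (by rw [h1]; omega) j rfl
        have h5 := hh j
        rw [h4, h2, h1] at h5
        omega
  funext i
  exact key _ i rfl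

lemma edges_surj {V : Type*} [Fintype V] [DecidableEq V] (G : SimpleGraph V) (v0 : V) (T : Finset (Sym2 V))
    (hT : ∀ e ∈ T, e ∈ G.edgeSet)
    (ht : (SimpleGraph.fromEdgeSet (T : Set (Sym2 V))).IsTree) :
    ∃ f : {u : V // u ≠ v0} → V, (∀ i : {u : V // u ≠ v0}, G.Adj i (f i)) ∧ Acyc v0 f ∧ edges v0 f = T := by
  set H := SimpleGraph.fromEdgeSet (T : Set (Sym2 V)) with hH
  have hex : ∀ i : {u : V // u ≠ v0}, ∃ w, H.Adj i w ∧ H.dist w v0 < H.dist i v0 := by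
    intro i
    obtain ⟨i, hi⟩ := i
    obtain ⟨p, hp⟩ := ht.connected.exists_walk_length_eq_dist i v0
    change ∃ w, H.Adj i w ∧ H.dist w v0 < H.dist i v0
    cases p with
    | nil => exact absurd rfl hi
    | cons hadj q =>
      refine ⟨_, hadj, ?_⟩
      have := SimpleGraph.dist_le q
      rw [← hp, SimpleGraph.Walk.length_cons]
      omega
  choose f hf1 hf2 using hex
  have hmem : ∀ i : {u : V // u ≠ v0}, s((i : V), f i) ∈ T := fun i => by
    have := hf1 i
    rw [hH, SimpleGraph.fromEdgeSet_adj] at this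
    exact this.1
  have hG : ∀ i : {u : V // u ≠ v0}, G.Adj i (f i) := fun i => hT _ (hmem i)
  have ha : Acyc v0 f := ⟨fun v => H.dist v v0, hf2⟩
  refine ⟨f, hG, ha, ?_⟩
  apply Finset.eq_of_subset_of_card_le
  · intro e he
    simp only [edges, mem_image, mem_univ, true_and] at he
    obtain ⟨i, rfl⟩ := he
    exact hmem i
  · rw [edges_card G v0 f hG ha]
    have h1 := (SimpleGraph.isTree_iff_connected_and_card.mp ht).2
    rw [card_edgeSet G T hT, Nat.card_eq_fintype_card] at h1
    have := card_sub v0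
    omega

end WMTT

/-- Weighted matrix-tree theorem: for a finite connected simple graph `G` with positive
conductances `c` on its edges, the sum over spanning trees of `G` of the product of the
conductances of their edges equals any principal cofactor of the weighted Laplacian
(the determinant of the Laplacian with the row and column of an arbitrary vertex `v0`
deleted). -/
theorem weighted_matrix_tree_theorem {V : Type*} [Fintype V] [DecidableEq V]
    (G : SimpleGraph V) (hconn : G.Connected)
    (c : Sym2 V → ℝ) (hc : ∀ e ∈ G.edgeSet, 0 < c e)
    (Δ : Matrix V V ℝ)
    (hΔdiag : ∀ v : V, Δ v v = ∑ u ∈ G.neighborFinset v, c s(v, u))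
    (hΔadj : ∀ u v : V, u ≠ v → G.Adj u v → Δ u v = -c s(u, v))
    (hΔoff : ∀ u v : V, u ≠ v → ¬G.Adj u v → Δ u v = 0)
    (v0 : V) :
    ∑ T ∈ G.edgeFinset.powerset.filter
        (fun T => (SimpleGraph.fromEdgeSet (T : Set (Sym2 V))).IsTree),
      ∏ e ∈ T, c e =
    (Δ.submatrix (fun i : {u : V // u ≠ v0} => (i : V))
      (fun j : {u : V // u ≠ v0} => (j : V))).det := by
  have hrow : Δ.submatrix (fun i : {u : V // u ≠ v0} => (i : V))
      (fun j : {u : V // u ≠ v0} => (j : V)) = fun i : {u : V // u ≠ v0} =>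
        ∑ w ∈ G.neighborFinset i, c s((i : V), w) •
          (fun j : {u : V // u ≠ v0} =>
            ((if (j : V) = i then 1 else 0) - (if (j : V) = w then 1 else 0) : ℝ)) := by
    ext i j
    rw [Matrix.submatrix_apply, Finset.sum_apply]
    simp only [Pi.smul_apply, smul_eq_mul, mul_sub, Finset.sum_sub_distrib, mul_ite, mul_one,
      mul_zero, Finset.sum_ite_eq, SimpleGraph.mem_neighborFinset]
    by_cases hij : (j : V) = i
    · simp [hij, hΔdiag]
    · by_cases hadj : G.Adj i j
      · simp [hij, hadj, hΔadj _ _ (Ne.symm hij) hadj]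
      · simp [hij, hadj, hΔoff _ _ (Ne.symm hij) hadj]
  have hdet : (Δ.submatrix (fun i : {u : V // u ≠ v0} => (i : V))
      (fun j : {u : V // u ≠ v0} => (j : V))).det =
      ∑ f ∈ Fintype.piFinset (fun i : {u : V // u ≠ v0} => G.neighborFinset (i : V)),
        (∏ i : {u : V // u ≠ v0}, c s((i : V), f i)) * (WMTT.fmat v0 f).det := by
    rw [hrow]
    have h1 := (Matrix.detRowAlternating (R := ℝ)
      (n := {u : V // u ≠ v0})).toMultilinearMap.map_sum_finset
      (fun (i : {u : V // u ≠ v0}) (w : V) => c s((i : V), w) •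
          (fun j : {u : V // u ≠ v0} =>
            ((if (j : V) = i then 1 else 0) - (if (j : V) = w then 1 else 0) : ℝ)))
      (fun i : {u : V // u ≠ v0} => G.neighborFinset (i : V))
    refine Eq.trans ?_ (h1.trans ?_)
    · rfl
    · refine Finset.sum_congr (by congr) fun f _ => ?_
      rw [MultilinearMap.map_smul_univ, smul_eq_mul]
      congr 1
  rw [hdet]
  have hsplit : ∑ f ∈ Fintype.piFinset (fun i : {u : V // u ≠ v0} => G.neighborFinset (i : V)),
        (∏ i : {u : V // u ≠ v0}, c s((i : V), f i)) * (WMTT.fmat v0 f).det =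
      ∑ f ∈ (Fintype.piFinset
        (fun i : {u : V // u ≠ v0} => G.neighborFinset (i : V))).filter (WMTT.Acyc v0),
        ∏ i : {u : V // u ≠ v0}, c s((i : V), f i) := by
    rw [Finset.sum_filter]
    refine Finset.sum_congr rfl fun f _ => ?_
    by_cases hf : WMTT.Acyc v0 f
    · have := WMTT.det_acyc v0 f hf
      rw [if_pos hf]
      simp [this]
    · have := WMTT.det_not_acyc v0 f hf
      rw [if_neg hf]
      simp [this]
  rw [hsplit]
  have hmem : ∀ T : Set (Sym2 V), (T ∈ (do
      let a ← G.edgeFinset.powerset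
      pure (a : Set (Sym2 V)) : Finset (Set (Sym2 V)))) ↔
      ∃ A : Finset (Sym2 V), A ⊆ G.edgeFinset ∧ (A : Set (Sym2 V)) = T := by
    intro T
    simp only [Finset.bind_def, Finset.pure_def, Finset.mem_sup, Finset.mem_powerset,
      Finset.mem_singleton]
    exact ⟨fun ⟨A, h1, h2⟩ => ⟨A, h1, h2.symm⟩, fun ⟨A, h1, h2⟩ => ⟨A, h1, h2.symm⟩⟩
  symm
  refine Finset.sum_bij (fun f _ => (WMTT.edges v0 f : Set (Sym2 V))) ?_ ?_ ?_ ?_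
  · intro f hf
    simp only [Finset.mem_filter, Fintype.mem_piFinset, SimpleGraph.mem_neighborFinset] at hf
    rw [Finset.mem_filter, hmem]
    refine ⟨⟨_, fun e he => ?_, rfl⟩, WMTT.isTree G v0 f hf.1 hf.2⟩
    rw [SimpleGraph.mem_edgeFinset]
    exact WMTT.edges_mem G v0 f hf.1 e he
  · intro f hf g _ he
    exact WMTT.edges_inj v0 f g (Finset.mem_filter.mp hf).2 (Finset.coe_injective he)
  · intro T hT
    rw [Finset.mem_filter, hmem] at hT
    obtain ⟨⟨A, hA, rfl⟩, hT2⟩ := hT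
    obtain ⟨f, h1, h2, h3⟩ := WMTT.edges_surj G v0 A
      (fun e he => SimpleGraph.mem_edgeFinset.mp (hA he)) hT2
    refine ⟨f, ?_, congrArg _ h3⟩
    simp only [Finset.mem_filter, Fintype.mem_piFinset, SimpleGraph.mem_neighborFinset]
    exact ⟨h1, h2⟩
  · intro f hf
    simp only [Finset.mem_filter, Fintype.mem_piFinset, SimpleGraph.mem_neighborFinset] at hf
    rw [Finset.toFinset_coe]
    exact (WMTT.prod_edges G v0 f hf.1 hf.2 c).symm
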